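/- arXiv:2010.05127 — 3 statements merged into one kernel-verified Lean document; each statement's English description precedes it below -/
import Mathlib

section
/- Let f : ℝ^m → ℝ≥0 be a monotone symmetric norm and let x, y ∈ ℝ≥0^m and α, β ≥ 0 be such that Top_ℓ(x) ≤ α·Top_ℓ(y) + β for all ℓ ∈ [m]. Then f(x) ≤ α·f(y) + β·f(1,0,…,0). -/
/-!
Put `X = sortDesc x` and `z = α • sortDesc y + β • e₁`. Both are nonnegative and `X` is
non-increasing; the hypothesis says that every prefix sum of `X` is at most that of `z`. Symmetry
and the triangle inequality reduce the claim to `f X ≤ f z`.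

By Hahn–Banach (`exists_support`) there is a linear functional `w ≤ f` with `w X = f X`. Replacing
the coefficients of `w` by their positive parts does not decrease `w X`, and neither does sorting
them in non-increasing order, by the rearrangement inequality. For non-increasing nonnegative
coefficients, Abel summation (`abel_prefix`) turns the prefix inequalities into the pairing with `X` being at most
the pairing with `z`. Undoing the sorting, the latter is the value of `w` at a permutation of `z` in
which the coordinates with negative coefficient are set to zero, hence at most `f z` by monotonicity
and symmetry (`le_of_prefix`).
-/

open MeasureTheory ProbabilityTheory Real

noncomputable section

/-- `x` with its coordinates sorted in non-increasing order. -/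
def sortDesc {m : ℕ} (x : Fin m → ℝ) : Fin m → ℝ :=
  fun i => x (Tuple.sort x i.rev)

/-- `Top_ℓ(x)`: the sum of the `ℓ` largest coordinates of `x`. -/
def topl {m : ℕ} (ℓ : ℕ) (x : Fin m → ℝ) : ℝ :=
  ∑ i ∈ Finset.univ.filter (fun i : Fin m => (i : ℕ) < ℓ), sortDesc x i

/-- A monotone, symmetric norm on `ℝ^m` (with nonnegative values). -/
structure IsMonoSymNorm {m : ℕ} (f : (Fin m → ℝ) → ℝ) : Prop where
  nonneg : ∀ x, 0 ≤ f x
  eq_zero_iff : ∀ x, f x = 0 ↔ x = 0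
  smul : ∀ (c : ℝ) (x : Fin m → ℝ), f (c • x) = |c| * f x
  add_le : ∀ x y : Fin m → ℝ, f (x + y) ≤ f x + f y
  mono : ∀ x y : Fin m → ℝ, (∀ i, 0 ≤ x i) → (∀ i, x i ≤ y i) → f x ≤ f y
  symm : ∀ (σ : Equiv.Perm (Fin m)) (x : Fin m → ℝ), f (x ∘ σ) = f x

/-- The permutation that sorts the coordinates of `x` in non-increasing order. -/
def descPerm {m : ℕ} (x : Fin m → ℝ) : Equiv.Perm (Fin m) :=
  Fin.revPerm.trans (Tuple.sort x)

lemma sortDesc_antitone {m : ℕ} (x : Fin m → ℝ) : Antitone (sortDesc x) := by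
  intro i j hij
  exact Tuple.monotone_sort x (Fin.rev_le_rev.mpr hij)

/-- Abel summation as an inequality. The lower bound `c` on the coefficients is arbitrary so that
the induction on `m` can be applied with `c` the last coefficient. -/
lemma abel_prefix {m : ℕ} (w D : Fin m → ℝ) (hw : Antitone w)
    (hD : ∀ ℓ ≤ m, 0 ≤ ∑ i ∈ Finset.univ.filter (fun i : Fin m => (i : ℕ) < ℓ), D i)
    (c : ℝ) (hc : ∀ i, c ≤ w i) : c * ∑ i, D i ≤ ∑ i, w i * D i := by
  induction m generalizing c with
  | zero => simp
  | succ n ih =>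
    have h1 := ih (fun i => w i.castSucc) (fun i => D i.castSucc)
      (fun i j hij => hw (Fin.castSucc_le_castSucc_iff.mpr hij))
      (fun ℓ hℓ => by
        have := hD ℓ (by omega)
        rw [Finset.sum_filter, Fin.sum_univ_castSucc] at this
        rw [Finset.sum_filter]
        simpa [Nat.not_lt.mpr hℓ] using this)
      (w (Fin.last n)) (fun i => hw (Fin.le_last _))
    have h2 : 0 ≤ ∑ i, D i := by
      have := hD (n + 1) le_rfl
      rwa [Finset.filter_true_of_mem (fun i _ => i.isLt)] at this
    have h3 := mul_le_mul_of_nonneg_right (hc (Fin.last n)) h2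
    rw [Fin.sum_univ_castSucc (fun i => w i * D i)]
    rw [Fin.sum_univ_castSucc D] at h3 ⊢
    nlinarith

/-- Hahn–Banach: the norm `f` has a supporting linear functional at `x`. -/
lemma exists_support {m : ℕ} {f : (Fin m → ℝ) → ℝ} (hf : IsMonoSymNorm f) (x : Fin m → ℝ)
    (hx : x ≠ 0) : ∃ w : Fin m → ℝ, ∑ i, w i * x i = f x ∧ ∀ v, ∑ i, w i * v i ≤ f v := by
  obtain ⟨g, hg1, hg2⟩ := exists_extension_of_le_sublinear
    (LinearPMap.mkSpanSingleton (K := ℝ) x (f x) hx) f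
    (fun c hc v => by rw [hf.smul, abs_of_pos hc]) hf.add_le
    (by
      rintro ⟨v, hv⟩
      obtain ⟨c, rfl⟩ := Submodule.mem_span_singleton.mp hv
      have : (LinearPMap.mkSpanSingleton (K := ℝ) x (f x) hx) ⟨c • x, hv⟩ = c • f x :=
        LinearPMap.mkSpanSingleton'_apply _ _ _ _ _
      rw [this, hf.smul, smul_eq_mul]
      exact mul_le_mul_of_nonneg_right (le_abs_self c) (hf.nonneg x))
  have hcoord : ∀ v : Fin m → ℝ, ∑ i, g (Pi.single i 1) * v i = g v := by
    intro v
    rw [LinearMap.pi_apply_eq_sum_univ g v]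
    refine Finset.sum_congr rfl fun i _ => ?_
    rw [smul_eq_mul, mul_comm]
    congr 2
    funext j
    simp [Pi.single_apply, eq_comm]
  refine ⟨fun i => g (Pi.single i 1), ?_, fun v => (hcoord v).trans_le (hg2 v)⟩
  rw [hcoord]
  exact (hg1 ⟨x, Submodule.mem_span_singleton_self x⟩).trans
    (LinearPMap.mkSpanSingleton_apply _ _ _ _)

/-- Monotone symmetric norms respect weak majorization. -/
lemma le_of_prefix {m : ℕ} {f : (Fin m → ℝ) → ℝ} (hf : IsMonoSymNorm f) (X z : Fin m → ℝ)
    (hX : ∀ i, 0 ≤ X i) (hz : ∀ i, 0 ≤ z i) (hXa : Antitone X)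
    (h : ∀ ℓ ≤ m, ∑ i ∈ Finset.univ.filter (fun i : Fin m => (i : ℕ) < ℓ), X i ≤
      ∑ i ∈ Finset.univ.filter (fun i : Fin m => (i : ℕ) < ℓ), z i) : f X ≤ f z := by
  by_cases hX0 : X = 0
  · rw [(hf.eq_zero_iff X).mpr hX0]
    exact hf.nonneg z
  obtain ⟨w, hw1, hw2⟩ := exists_support hf X hX0
  set p : Fin m → ℝ := fun i => max (w i) 0 with hp
  set σ := descPerm p
  have hanti : Antitone (p ∘ σ) := sortDesc_antitone p
  have h1 : ∑ i, w i * X i ≤ ∑ i, p i * X i :=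
    Finset.sum_le_sum fun i _ => mul_le_mul_of_nonneg_right (le_max_left _ _) (hX i)
  have h2 : ∑ i, p i * X i ≤ ∑ i, (p ∘ σ) i * X i := by
    have := (hanti.monovary hXa).sum_comp_perm_mul_le_sum_mul (σ := σ.symm)
    simpa using this
  have h3 : ∑ i, (p ∘ σ) i * X i ≤ ∑ i, (p ∘ σ) i * z i := by
    have := abel_prefix (p ∘ σ) (fun i => z i - X i) hanti
      (fun ℓ hℓ => by
        rw [Finset.sum_sub_distrib]
        exact sub_nonneg.mpr (h ℓ hℓ)) 0 (fun i => le_max_right _ _)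
    simp only [mul_sub, Finset.sum_sub_distrib, zero_mul] at this
    linarith
  -- Moving the permutation onto `z`, the positive part becomes a mask on the coordinates.
  have h4 : ∑ i, (p ∘ σ) i * z i = ∑ i, w i * (if 0 ≤ w i then z (σ.symm i) else 0) := by
    rw [← Equiv.sum_comp σ (fun i => w i * (if 0 ≤ w i then z (σ.symm i) else 0))]
    refine Finset.sum_congr rfl fun i _ => ?_
    simp only [hp, Function.comp, Equiv.symm_apply_apply]
    split_ifs with hi
    · rw [max_eq_left hi]
    · rw [max_eq_right (le_of_not_ge hi)]; simp
  have h5 : f (fun i => if 0 ≤ w i then z (σ.symm i) else 0) ≤ f (z ∘ σ.symm) := by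
    refine hf.mono _ _ (fun i => ?_) (fun i => ?_)
    · split_ifs
      exacts [hz _, le_rfl]
    · dsimp only [Function.comp]
      split_ifs
      exacts [le_rfl, hz _]
  have h6 := hw2 (fun i => if 0 ≤ w i then z (σ.symm i) else 0)
  rw [hf.symm] at h5
  linarith

theorem stmt_1 {m : ℕ} (hm : 0 < m) (f : (Fin m → ℝ) → ℝ) (hf : IsMonoSymNorm f)
    (x y : Fin m → ℝ) (hx : ∀ i, 0 ≤ x i) (hy : ∀ i, 0 ≤ y i)
    (α β : ℝ) (hα : 0 ≤ α) (hβ : 0 ≤ β)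
    (h : ∀ ℓ : ℕ, 1 ≤ ℓ → ℓ ≤ m → topl ℓ x ≤ α * topl ℓ y + β) :
    f x ≤ α * f y + β * f (fun i => if (i : ℕ) = 0 then 1 else 0) := by
  set e : Fin m → ℝ := fun i => if (i : ℕ) = 0 then 1 else 0 with he
  have hfx : f (sortDesc x) = f x := hf.symm (descPerm x) x
  have hfy : f (sortDesc y) = f y := hf.symm (descPerm y) y
  have key : f (sortDesc x) ≤ f (α • sortDesc y + β • e) := by
    refine le_of_prefix hf _ _ (fun i => hx _) (fun i => ?_) (sortDesc_antitone x) ?_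
    · have h1 : 0 ≤ e i := by
        simp only [he]
        split_ifs <;> norm_num
      have h2 : 0 ≤ sortDesc y i := hy _
      simp only [Pi.add_apply, Pi.smul_apply, smul_eq_mul]
      positivity
    · intro ℓ hℓ
      rcases Nat.eq_zero_or_pos ℓ with rfl | hpos
      · simp
      have hsum : ∑ i ∈ Finset.univ.filter (fun i : Fin m => (i : ℕ) < ℓ), e i = 1 := by
        rw [Finset.sum_eq_single_of_mem (⟨0, hm⟩ : Fin m) (by simpa using hpos)]
        · simp [he]
        · intro b _ hb
          have : (b : ℕ) ≠ 0 := fun h0 => hb (Fin.ext h0)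
          simp [he, this]
      simp only [Pi.add_apply, Pi.smul_apply, smul_eq_mul, Finset.sum_add_distrib,
        ← Finset.mul_sum, hsum, mul_one]
      exact h ℓ hpos hℓ
  have htri := hf.add_le (α • sortDesc y) (β • e)
  rw [hf.smul, hf.smul, abs_of_nonneg hα, abs_of_nonneg hβ, hfy] at htri
  linarith
end
end

section
/- Let Z be a nonnegative random variable and λ ≥ 1 with E[λ^Z] finite. (i) If β_λ(Z) ≤ b, then for every c ≥ 0, Pr[Z ≥ b + c] ≤ λ^{-c}. (ii) If moreover λ ≥ 2, then E[Z·1_{Z ≥ β_λ(Z)+1}] ≤ (β_λ(Z) + 3)/λ. -/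
/-!
For `λ > 1` the effective size `β = β_λ(Z)` is characterised by `E[λ^Z] = λ^β`
(`integral_rpow_eq_rpow_effSize`), and `β ≥ 0` because `λ^Z ≥ 1`.

Tail bound: Markov's inequality for `λ^Z` at the level `λ^(b+c)`; for `λ = 1` the bound is `1`.

Exceptional part: the pointwise inequality `Z · 1_{Z ≥ β+1} ≤ (β+3)/λ · λ^(Z-β)` holds
(`le_mul_rpow_of_add_one_le`), and integrating it gives the claim since `E[λ^(Z-β)] = 1`. With
`Z = β + 1 + t` the inequality reads `β + 1 + t ≤ (β + 3) λ^t`, which follows from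
`λ^t ≥ 1 + t log λ ≥ 1 + t/2` for `λ ≥ 2`.
-/

open MeasureTheory ProbabilityTheory Real

noncomputable section

/-- The `λ`-effective size of a random variable: `β_λ(Z) = log_λ E[λ^Z]` for `λ ≠ 1`,
and `β_1(Z) = E[Z]`. -/
def effSize {Ω : Type*} [MeasurableSpace Ω] (μ : Measure Ω) (lam : ℝ) (Z : Ω → ℝ) : ℝ :=
  if lam = 1 then ∫ ω, Z ω ∂μ else Real.logb lam (∫ ω, lam ^ (Z ω) ∂μ)

theorem one_le_integral_rpow {Ω : Type*} [MeasurableSpace Ω] (μ : Measure Ω)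
    [IsProbabilityMeasure μ] (Z : Ω → ℝ) (hZnn : ∀ ω, 0 ≤ Z ω) (lam : ℝ) (hlam : 1 ≤ lam)
    (hint : Integrable (fun ω => lam ^ (Z ω)) μ) : 1 ≤ ∫ ω, lam ^ (Z ω) ∂μ := by
  have h := integral_mono (μ := μ) (integrable_const (1 : ℝ)) hint
    (fun ω => Real.one_le_rpow hlam (hZnn ω))
  simpa using h

theorem integral_rpow_eq_rpow_effSize {Ω : Type*} [MeasurableSpace Ω] (μ : Measure Ω)
    [IsProbabilityMeasure μ] (Z : Ω → ℝ) (hZnn : ∀ ω, 0 ≤ Z ω) (lam : ℝ) (hlam : 1 < lam)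
    (hint : Integrable (fun ω => lam ^ (Z ω)) μ) :
    ∫ ω, lam ^ (Z ω) ∂μ = lam ^ effSize μ lam Z := by
  have h := one_le_integral_rpow μ Z hZnn lam hlam.le hint
  rw [effSize, if_neg hlam.ne', Real.rpow_logb (by linarith) hlam.ne' (by linarith)]

theorem effSize_nonneg {Ω : Type*} [MeasurableSpace Ω] (μ : Measure Ω)
    [IsProbabilityMeasure μ] (Z : Ω → ℝ) (hZnn : ∀ ω, 0 ≤ Z ω) (lam : ℝ) (hlam : 1 < lam)
    (hint : Integrable (fun ω => lam ^ (Z ω)) μ) : 0 ≤ effSize μ lam Z := by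
  rw [effSize, if_neg hlam.ne']
  exact Real.logb_nonneg hlam (one_le_integral_rpow μ Z hZnn lam hlam.le hint)

/-- The pointwise domination of the exceptional part by a multiple of `λ^z`. -/
theorem le_mul_rpow_of_add_one_le (lam β z : ℝ) (hlam : 2 ≤ lam) (hβ : 0 ≤ β)
    (hz : β + 1 ≤ z) : z ≤ (β + 3) / lam * lam ^ (-β) * lam ^ z := by
  have hpos : 0 < lam := by linarith
  obtain ⟨t, ht, rfl⟩ : ∃ t, 0 ≤ t ∧ z = β + 1 + t := ⟨z - (β + 1), by linarith, by ring⟩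
  have hlog : 1 / 2 ≤ Real.log lam := by
    have h1 := Real.log_two_gt_d9
    have h2 := Real.log_le_log (by norm_num) hlam
    linarith
  have hexp : 1 + t / 2 ≤ lam ^ t := by
    rw [Real.rpow_def_of_pos hpos]
    have h1 := Real.add_one_le_exp (Real.log lam * t)
    nlinarith
  have heq : (β + 3) / lam * lam ^ (-β) * lam ^ (β + 1 + t) = (β + 3) * lam ^ t := by
    rw [Real.rpow_add hpos, Real.rpow_add hpos, Real.rpow_one, Real.rpow_neg hpos.le]
    have : lam ^ β ≠ 0 := (Real.rpow_pos_of_pos hpos β).ne'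
    field_simp
  rw [heq]
  nlinarith

theorem stmt_3 {Ω : Type*} [MeasurableSpace Ω] (μ : Measure Ω) [IsProbabilityMeasure μ]
    (Z : Ω → ℝ) (hZmeas : Measurable Z) (hZnn : ∀ ω, 0 ≤ Z ω)
    (lam : ℝ) (hlam : 1 ≤ lam)
    (hint : Integrable (fun ω => lam ^ (Z ω)) μ) :
    (∀ b c : ℝ, 0 ≤ c → effSize μ lam Z ≤ b →
      μ {ω | b + c ≤ Z ω} ≤ ENNReal.ofReal (lam ^ (-c))) ∧
    (2 ≤ lam →
      ∫ ω, (if effSize μ lam Z + 1 ≤ Z ω then Z ω else 0) ∂μ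
        ≤ (effSize μ lam Z + 3) / lam) := by
  have hpos : 0 < lam := by linarith
  constructor
  · intro b c _ hb
    rcases hlam.eq_or_lt with rfl | hlam1
    · simpa using prob_le_one
    have hE := integral_rpow_eq_rpow_effSize μ Z hZnn lam hlam1 hint
    have hM := mul_meas_ge_le_integral_of_nonneg (μ := μ)
      (Filter.Eventually.of_forall fun ω => Real.rpow_nonneg hpos.le (Z ω)) hint (lam ^ (b + c))
    have hset : {ω | lam ^ (b + c) ≤ lam ^ (Z ω)} = {ω | b + c ≤ Z ω} := by
      ext ω
      exact Real.rpow_le_rpow_left_iff hlam1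
    rw [hset, hE] at hM
    have hle : lam ^ effSize μ lam Z ≤ lam ^ b := Real.rpow_le_rpow_of_exponent_le hlam hb
    rw [← ENNReal.ofReal_toReal (measure_ne_top μ {ω | b + c ≤ Z ω})]
    apply ENNReal.ofReal_le_ofReal
    change lam ^ (b + c) * (μ {ω | b + c ≤ Z ω}).toReal ≤ _ at hM
    have hsplit : lam ^ b = lam ^ (b + c) * lam ^ (-c) := by
      rw [← Real.rpow_add hpos]
      congr 1
      ring
    rw [hsplit] at hle
    exact le_of_mul_le_mul_left (hM.trans hle) (Real.rpow_pos_of_pos hpos _)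
  · intro hlam2
    have hlam1 : 1 < lam := by linarith
    have hE := integral_rpow_eq_rpow_effSize μ Z hZnn lam hlam1 hint
    have hβ := effSize_nonneg μ Z hZnn lam hlam1 hint
    set β := effSize μ lam Z
    calc ∫ ω, (if β + 1 ≤ Z ω then Z ω else 0) ∂μ
        ≤ ∫ ω, (β + 3) / lam * lam ^ (-β) * lam ^ (Z ω) ∂μ := by
          refine integral_mono_of_nonneg (Filter.Eventually.of_forall fun ω => ?_)
            (hint.const_mul _) (Filter.Eventually.of_forall fun ω => ?_)
          · show 0 ≤ if β + 1 ≤ Z ω then Z ω else 0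
            split_ifs
            exacts [hZnn ω, le_rfl]
          · show (if β + 1 ≤ Z ω then Z ω else 0) ≤ _
            split_ifs with h
            · exact le_mul_rpow_of_add_one_le lam β (Z ω) hlam2 hβ h
            · positivity
      _ = (β + 3) / lam := by
          rw [integral_const_mul, hE, mul_assoc, ← Real.rpow_add hpos]
          simp
end
end

section
/- Let f : ℝ^m → ℝ≥0 be a monotone symmetric norm, let y ∈ ℝ≥0^m be a non-increasing vector, and let (B_ℓ)_{ℓ ∈ POS_m} be a non-decreasing, nonnegative sequence with B_ℓ ≤ 2B_{ℓ/2} for all ℓ ∈ POS_m with ℓ > 1. Let g be the upper envelope curve of (B_ℓ)_{ℓ ∈ POS_m} and define h ∈ ℝ^m by h_i := g(i) − g(i−1). Then: (a) if Top_ℓ(y) ≤ B_ℓ for all ℓ ∈ POS_m, then f(y) ≤ 2·f(h); and (b) if Top_ℓ(y) ≥ B_ℓ for all ℓ ∈ POS_m, then f(y) ≥ f(h)/3. -/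
/-!
Both parts follow from the Ky Fan dominance principle for monotone symmetric norms
(`IsMonoSymNorm.le_of_partialSum_le`): if `y, z ≥ 0` are non-increasing and every partial sum of
`y` is at most the corresponding partial sum of `z`, then `f y ≤ f z`. Indeed `y` then lies below
a convex combination of permutations of `z` (`exists_mem_hull_ge`): otherwise a separating
functional of the closed convex set `conv {z ∘ σ} - ℝ≥0^m` would have nonnegative coefficients and
contradict the rearrangement inequality together with summation by parts.

The curve `g` is concave and non-decreasing with `g 0 = 0`, so `h` is non-increasing, nonnegative,
and its `k`-th partial sum is `g k`. Fix `1 ≤ k ≤ m` and let `ℓ` be the power of two with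
`ℓ ≤ k < 2 ℓ`.

* In (a), `Top_k y ≤ 2 Top_ℓ y ≤ 2 B_ℓ ≤ 2 g ℓ ≤ 2 g k`, so `y` is dominated by `2 h`.
* In (b), all points of `S` lie below the line `x ↦ B_ℓ (1 + x / ℓ)`: to the left of `ℓ` because
  `B` is non-decreasing, to the right because `B` at most doubles when the index doubles. Hence
  `g k ≤ 3 B_ℓ ≤ 3 Top_ℓ y ≤ 3 Top_k y`, so `h` is dominated by `3 y`.
-/

open MeasureTheory ProbabilityTheory Real

noncomputable section

/-- `POS_m := {2^i : i ∈ ℤ≥0, 2^i ≤ m}`. -/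
def POS (m : ℕ) : Set ℕ := {ℓ | ∃ i : ℕ, ℓ = 2 ^ i ∧ 2 ^ i ≤ m}

/-- The point set `S = {(ℓ, B_ℓ) : ℓ ∈ POS_m} ∪ {(0,0), (m, B_K)}` where
`K = 2^⌊log₂ m⌋` is the largest index in `POS_m`. -/
def envPoints (m : ℕ) (B : ℕ → ℝ) : Set (ℝ × ℝ) :=
  {p | ∃ ℓ ∈ POS m, p = ((ℓ : ℝ), B ℓ)} ∪
    {((0 : ℝ), (0 : ℝ)), ((m : ℝ), B (2 ^ Nat.log 2 m))}

/-- The upper envelope curve `g(x) := max {y : (x,y) ∈ conv(S)}`. -/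
def envCurve (m : ℕ) (B : ℕ → ℝ) (x : ℝ) : ℝ :=
  sSup {y : ℝ | (x, y) ∈ convexHull ℝ (envPoints m B)}

/-! ### Partial sums of vectors -/

/-- Extension of a vector by zero to a sequence indexed by `ℕ`. -/
def extZero {m : ℕ} (x : Fin m → ℝ) (n : ℕ) : ℝ := if hn : n < m then x ⟨n, hn⟩ else 0

lemma extZero_val {m : ℕ} (x : Fin m → ℝ) (i : Fin m) : extZero x i = x i := by
  simp [extZero]

lemma extZero_nonneg {m : ℕ} {x : Fin m → ℝ} (hx : ∀ i, 0 ≤ x i) (n : ℕ) : 0 ≤ extZero x n := by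
  unfold extZero
  split_ifs
  · exact hx _
  · exact le_rfl

lemma extZero_antitone {m : ℕ} {x : Fin m → ℝ} (hx : ∀ i, 0 ≤ x i) (hanti : Antitone x) :
    Antitone (extZero x) := by
  intro a b hab
  by_cases hb : b < m
  · have ha : a < m := lt_of_le_of_lt hab hb
    simp only [extZero, ha, hb, dif_pos]
    exact hanti hab
  · have : extZero x b = 0 := by simp [extZero, hb]
    rw [this]
    exact extZero_nonneg hx a

lemma sum_filter_lt_eq {m : ℕ} (x : Fin m → ℝ) (k : ℕ) :
    ∑ i ∈ Finset.univ.filter (fun i : Fin m => (i : ℕ) < k), x i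
      = ∑ n ∈ Finset.range k, extZero x n := by
  refine Finset.sum_bij_ne_zero (fun i _ _ => (i : ℕ)) ?_ ?_ ?_ ?_
  · intro i hi _
    simpa using hi
  · intro i _ _ j _ _ hij
    exact Fin.ext hij
  · intro n hn h0
    have hnm : n < m := by
      by_contra hc
      exact h0 (by simp [extZero, hc])
    refine ⟨⟨n, hnm⟩, by simpa using hn, ?_, rfl⟩
    simpa [extZero, hnm] using h0
  · intro i _ _
    exact (extZero_val x i).symm

lemma sortDesc_of_antitone {m : ℕ} {y : Fin m → ℝ} (hy : Antitone y) : sortDesc y = y := by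
  have hmono : Monotone (y ∘ (Fin.revPerm : Equiv.Perm (Fin m))) := by
    intro i j hij
    exact hy (by simpa using hij)
  have hsort := (Tuple.comp_sort_eq_comp_iff_monotone (f := y) (σ := Fin.revPerm)).2 hmono
  funext i
  have := congrFun hsort i.rev
  simpa [sortDesc] using this.symm

lemma topl_of_antitone {m : ℕ} {y : Fin m → ℝ} (hy : Antitone y) (k : ℕ) :
    topl k y = ∑ n ∈ Finset.range k, extZero y n := by
  rw [topl, sortDesc_of_antitone hy, sum_filter_lt_eq]

/-- Summation by parts with non-increasing weights `a`; for `a m = 0` it says that a sum whose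
partial sums are all nonnegative stays nonnegative after weighting. -/
lemma sum_mul_ge {a d : ℕ → ℝ} (ha : Antitone a) (m : ℕ)
    (hd : ∀ k ≤ m, 0 ≤ ∑ n ∈ Finset.range k, d n) :
    a m * ∑ n ∈ Finset.range m, d n ≤ ∑ n ∈ Finset.range m, a n * d n := by
  induction m with
  | zero => simp
  | succ m ih =>
    have h1 := ih (fun k hk => hd k (by omega))
    have h2 := hd (m + 1) le_rfl
    have h3 : a (m + 1) ≤ a m := ha (Nat.le_succ m)
    have h4 := mul_le_mul_of_nonneg_right h3 h2
    rw [Finset.sum_range_succ] at h4 ⊢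
    rw [Finset.sum_range_succ (fun n => a n * d n)]
    nlinarith

lemma sum_mul_le_of_partialSum_le {m : ℕ} {w y z : Fin m → ℝ} (hw : ∀ i, 0 ≤ w i)
    (hwanti : Antitone w)
    (hle : ∀ k ≤ m, ∑ n ∈ Finset.range k, extZero y n ≤ ∑ n ∈ Finset.range k, extZero z n) :
    ∑ i, w i * y i ≤ ∑ i, w i * z i := by
  have key := sum_mul_ge (extZero_antitone hw hwanti) m (d := fun n => extZero z n - extZero y n)
    (fun k hk => by rw [Finset.sum_sub_distrib]; linarith [hle k hk])
  have h0 : extZero w m = 0 := by simp [extZero]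
  rw [h0, zero_mul, Finset.sum_range] at key
  simp only [extZero_val, mul_sub, Finset.sum_sub_distrib] at key
  linarith

/-! ### Dominance principle for monotone symmetric norms -/

/-- Rearrangement inequality plus summation by parts: for nonnegative weights `w`, some permutation
of `z` pairs with `w` to at least `∑ w i * y i`. -/
lemma exists_perm_sum_le {m : ℕ} {w y z : Fin m → ℝ} (hw : ∀ i, 0 ≤ w i) (hy : Antitone y)
    (hle : ∀ k ≤ m, ∑ n ∈ Finset.range k, extZero y n ≤ ∑ n ∈ Finset.range k, extZero z n) :
    ∃ σ : Equiv.Perm (Fin m), ∑ i, w i * y i ≤ ∑ i, w i * z (σ i) := by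
  let τ : Equiv.Perm (Fin m) := Fin.revPerm.trans (Tuple.sort w)
  have hanti : Antitone (w ∘ τ) := by
    intro i j hij
    have := Tuple.monotone_sort w (Fin.rev_le_rev.2 hij)
    simpa [τ] using this
  have hmv : Monovary (w ∘ τ) y := hanti.monovary hy
  have h1 := hmv.sum_comp_perm_mul_le_sum_mul (σ := τ⁻¹)
  have h2 := sum_mul_le_of_partialSum_le (w := w ∘ τ) (fun i => hw _) hanti hle
  refine ⟨τ⁻¹, ?_⟩
  calc ∑ i, w i * y i = ∑ i, (w ∘ τ) (τ⁻¹ i) * y i := by simp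
    _ ≤ ∑ i, (w ∘ τ) i * y i := h1
    _ ≤ ∑ i, (w ∘ τ) i * z i := h2
    _ = ∑ i, w i * z (τ⁻¹ i) := by
      rw [← Equiv.sum_comp τ (fun i => w i * z (τ⁻¹ i))]
      simp

open scoped Pointwise in
/-- A non-increasing `y` whose partial sums are bounded by those of `z` lies coordinatewise below a
convex combination of permutations of `z`. -/
lemma exists_mem_hull_ge {m : ℕ} {y z : Fin m → ℝ} (hy : Antitone y)
    (hle : ∀ k ≤ m, ∑ n ∈ Finset.range k, extZero y n ≤ ∑ n ∈ Finset.range k, extZero z n) :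
    ∃ u ∈ convexHull ℝ (Set.range fun σ : Equiv.Perm (Fin m) => z ∘ σ), ∀ i, y i ≤ u i := by
  set A := convexHull ℝ (Set.range fun σ : Equiv.Perm (Fin m) => z ∘ σ) with hA
  let N : Set (Fin m → ℝ) := Set.Iic 0
  by_contra! hcon
  have hAc : IsCompact A := (Set.finite_range _).isCompact_convexHull ℝ
  have hclosed : IsClosed (A + N) := isClosed_Iic.add_left_of_isCompact hAc
  have hconv : Convex ℝ (A + N) := (convex_convexHull ℝ _).add (convex_Iic 0)
  have hnot : y ∉ A + N := by
    rintro ⟨u, hu, v, hv, rfl⟩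
    obtain ⟨i, hi⟩ := hcon u hu
    have : v i ≤ 0 := hv i
    simp only [Pi.add_apply] at hi
    linarith
  obtain ⟨φ, c, hφ, hc⟩ := geometric_hahn_banach_closed_point hconv hclosed hnot
  let w : Fin m → ℝ := fun i => φ (Pi.single i 1)
  have hφw : ∀ x : Fin m → ℝ, φ x = ∑ i, w i * x i := by
    intro x
    have hx : x = ∑ i, x i • (Pi.single i (1 : ℝ) : Fin m → ℝ) := by
      funext j
      simp [Finset.sum_apply, Pi.single_apply]
    conv_lhs => rw [hx]
    rw [map_sum]
    refine Finset.sum_congr rfl fun i _ => ?_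
    rw [map_smul, smul_eq_mul, mul_comm]
  have hzA : ∀ σ : Equiv.Perm (Fin m), z ∘ σ ∈ A := fun σ => subset_convexHull ℝ _ ⟨σ, rfl⟩
  -- A negative coefficient would make `φ` unbounded above along the downward ray `-t eᵢ`.
  have hw : ∀ i, 0 ≤ w i := by
    intro i
    by_contra! hi
    obtain ⟨n, hn⟩ := exists_nat_gt ((c - φ z) / (-w i))
    have hv : (-(n : ℝ)) • (Pi.single i (1 : ℝ) : Fin m → ℝ) ∈ N := by
      intro j
      by_cases hj : j = i
      · subst hj
        simp
      · simp [hj]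
    have h1 := hφ _ (Set.add_mem_add (hzA 1) hv)
    rw [map_add, map_smul] at h1
    have h2 : φ (z ∘ (1 : Equiv.Perm (Fin m))) = φ z := rfl
    have h3 : φ (Pi.single i (1 : ℝ) : Fin m → ℝ) = w i := rfl
    rw [h2, h3, smul_eq_mul] at h1
    rw [div_lt_iff₀ (by linarith)] at hn
    linarith
  obtain ⟨σ, hσ⟩ := exists_perm_sum_le hw hy hle
  have h1 := hφ _ (Set.add_mem_add (hzA σ) (show (0 : Fin m → ℝ) ∈ N from Set.mem_Iic.2 le_rfl))
  rw [add_zero, hφw] at h1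
  rw [hφw] at hc
  simp only [Function.comp_apply] at h1
  linarith

/-- Ky Fan dominance for monotone symmetric norms. The vector `z` need not be sorted, as its partial
sums in the given order are at most those of its sorted version. -/
lemma IsMonoSymNorm.le_of_partialSum_le {m : ℕ} {f : (Fin m → ℝ) → ℝ} (hf : IsMonoSymNorm f)
    {y z : Fin m → ℝ} (hy0 : ∀ i, 0 ≤ y i) (hy : Antitone y)
    (hle : ∀ k ≤ m, ∑ n ∈ Finset.range k, extZero y n ≤ ∑ n ∈ Finset.range k, extZero z n) :
    f y ≤ f z := by
  obtain ⟨u, hu, hyu⟩ := exists_mem_hull_ge hy hle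
  have hball : Convex ℝ {x | f x ≤ f z} := by
    intro x hx v hv a b ha hb hab
    have h1 := hf.add_le (a • x) (b • v)
    rw [hf.smul, hf.smul, abs_of_nonneg ha, abs_of_nonneg hb] at h1
    have h2 := mul_le_mul_of_nonneg_left hx ha
    have h3 := mul_le_mul_of_nonneg_left hv hb
    have h4 : a * f z + b * f z = f z := by rw [← add_mul, hab, one_mul]
    simp only [Set.mem_ofPred_eq]
    linarith
  have hsub : convexHull ℝ (Set.range fun σ : Equiv.Perm (Fin m) => z ∘ σ) ⊆ {x | f x ≤ f z} := by
    refine convexHull_min ?_ hball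
    rintro _ ⟨σ, rfl⟩
    exact (hf.symm σ z).le
  exact (hf.mono y u hy0 hyu).trans (hsub hu)

/-! ### The upper envelope curve -/

lemma hull_le_line {S : Set (ℝ × ℝ)} {a b : ℝ} (hS : ∀ p ∈ S, p.2 ≤ a * p.1 + b)
    {p : ℝ × ℝ} (hp : p ∈ convexHull ℝ S) : p.2 ≤ a * p.1 + b := by
  have hconv : Convex ℝ {p : ℝ × ℝ | p.2 ≤ a * p.1 + b} := by
    intro p hp q hq s t hs ht hst
    simp only [Set.mem_ofPred_eq, Prod.snd_add, Prod.smul_snd, Prod.fst_add, Prod.smul_fst,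
      smul_eq_mul] at *
    have h1 := mul_le_mul_of_nonneg_left hp hs
    have h2 := mul_le_mul_of_nonneg_left hq ht
    have h3 : s * b + t * b = b := by rw [← add_mul, hst, one_mul]
    nlinarith
  exact convexHull_min hS hconv hp

lemma pow_log_mem_POS {m k : ℕ} (hk : 0 < k) (hkm : k ≤ m) : 2 ^ Nat.log 2 k ∈ POS m :=
  ⟨_, rfl, (Nat.pow_log_le_self 2 hk.ne').trans hkm⟩

lemma le_pow_log_of_mem_POS {m ℓ : ℕ} (hℓ : ℓ ∈ POS m) : ℓ ≤ 2 ^ Nat.log 2 m := by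
  obtain ⟨i, rfl, hi⟩ := hℓ
  exact Nat.pow_le_pow_right (by norm_num) (Nat.le_log_of_pow_le (by norm_num) hi)

lemma POS_mem_envPoints {m ℓ : ℕ} {B : ℕ → ℝ} (hℓ : ℓ ∈ POS m) :
    ((ℓ : ℝ), B ℓ) ∈ convexHull ℝ (envPoints m B) :=
  subset_convexHull ℝ _ (Or.inl ⟨ℓ, hℓ, rfl⟩)

lemma zero_mem_envHull (m : ℕ) (B : ℕ → ℝ) :
    ((0 : ℝ), (0 : ℝ)) ∈ convexHull ℝ (envPoints m B) :=
  subset_convexHull ℝ _ (Or.inr (Or.inl rfl))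

lemma last_mem_envHull (m : ℕ) (B : ℕ → ℝ) :
    ((m : ℝ), B (2 ^ Nat.log 2 m)) ∈ convexHull ℝ (envPoints m B) :=
  subset_convexHull ℝ _ (Or.inr (Or.inr rfl))

section Envelope

variable {m : ℕ} {B : ℕ → ℝ}

lemma envHull_snd_le (hm : 0 < m) (hBnn : ∀ ℓ ∈ POS m, 0 ≤ B ℓ)
    (hBmono : ∀ ℓ ∈ POS m, ∀ ℓ' ∈ POS m, ℓ ≤ ℓ' → B ℓ ≤ B ℓ')
    {p : ℝ × ℝ} (hp : p ∈ convexHull ℝ (envPoints m B)) : p.2 ≤ B (2 ^ Nat.log 2 m) := by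
  have hK := pow_log_mem_POS hm le_rfl
  have := hull_le_line (a := 0) (b := B (2 ^ Nat.log 2 m)) (S := envPoints m B) ?_ hp
  · simpa using this
  · rintro q (⟨ℓ, hℓ, rfl⟩ | rfl | rfl)
    · simpa using hBmono _ hℓ _ hK (le_pow_log_of_mem_POS hℓ)
    · simpa using hBnn _ hK
    · simp

lemma le_envCurve (hm : 0 < m) (hBnn : ∀ ℓ ∈ POS m, 0 ≤ B ℓ)
    (hBmono : ∀ ℓ ∈ POS m, ∀ ℓ' ∈ POS m, ℓ ≤ ℓ' → B ℓ ≤ B ℓ')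
    {x v : ℝ} (hv : (x, v) ∈ convexHull ℝ (envPoints m B)) : v ≤ envCurve m B x :=
  le_csSup ⟨B (2 ^ Nat.log 2 m), fun _ hu => envHull_snd_le hm hBnn hBmono hu⟩ hv

lemma envCurve_le (hm : 0 < m) {x c : ℝ} (hx0 : 0 ≤ x) (hxm : x ≤ m)
    (hc : ∀ v, (x, v) ∈ convexHull ℝ (envPoints m B) → v ≤ c) : envCurve m B x ≤ c := by
  refine csSup_le ?_ hc
  have hm' : (0 : ℝ) < m := by exact_mod_cast hm
  -- Over `[0, m]` the hull contains the chord from `(0, 0)` to the last point.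
  refine ⟨x / m * B (2 ^ Nat.log 2 m), ?_⟩
  have := (convex_convexHull ℝ (envPoints m B)) (zero_mem_envHull m B) (last_mem_envHull m B)
    (a := 1 - x / m) (b := x / m) (by rw [sub_nonneg, div_le_one hm']; exact hxm) (by positivity)
    (by ring)
  have hx : x / m * m = x := by field_simp
  simpa [hx] using this

lemma envCurve_mono (hm : 0 < m) (hBnn : ∀ ℓ ∈ POS m, 0 ≤ B ℓ)
    (hBmono : ∀ ℓ ∈ POS m, ∀ ℓ' ∈ POS m, ℓ ≤ ℓ' → B ℓ ≤ B ℓ')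
    {x x' : ℝ} (hx0 : 0 ≤ x) (hxx : x ≤ x') (hxm : x' ≤ m) :
    envCurve m B x ≤ envCurve m B x' := by
  refine envCurve_le hm hx0 (hxx.trans hxm) fun v hv => ?_
  rcases hxx.eq_or_lt with rfl | hlt
  · exact le_envCurve hm hBnn hBmono hv
  have hpos : 0 < (m : ℝ) - x := by linarith
  -- The segment from `(x, v)` to the last point has second coordinate at least `v`.
  let t : ℝ := (x' - x) / (m - x)
  have ht0 : 0 ≤ t := div_nonneg (by linarith) hpos.le
  have ht1 : t ≤ 1 := by rw [div_le_one hpos]; linarith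
  have hmem := (convex_convexHull ℝ (envPoints m B)) hv (last_mem_envHull m B)
    (a := 1 - t) (b := t) (by linarith) ht0 (by ring)
  have hfst : (1 - t) * x + t * m = x' := by
    have : t * (m - x) = x' - x := div_mul_cancel₀ _ hpos.ne'
    linarith
  have hmem' : (x', (1 - t) * v + t * B (2 ^ Nat.log 2 m)) ∈ convexHull ℝ (envPoints m B) := by
    rw [← hfst]
    simpa using hmem
  have h1 := le_envCurve hm hBnn hBmono hmem'
  have h2 : v ≤ B (2 ^ Nat.log 2 m) := envHull_snd_le hm hBnn hBmono hv
  nlinarith [mul_le_mul_of_nonneg_left h2 ht0]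

lemma envCurve_midpoint (hm : 0 < m) (hBnn : ∀ ℓ ∈ POS m, 0 ≤ B ℓ)
    (hBmono : ∀ ℓ ∈ POS m, ∀ ℓ' ∈ POS m, ℓ ≤ ℓ' → B ℓ ≤ B ℓ')
    {x : ℝ} (hx0 : 0 ≤ x) (hxm : x + 1 + 1 ≤ m) :
    envCurve m B x + envCurve m B (x + 1 + 1) ≤ 2 * envCurve m B (x + 1) := by
  have key : ∀ u v, (x, u) ∈ convexHull ℝ (envPoints m B) →
      (x + 1 + 1, v) ∈ convexHull ℝ (envPoints m B) → u + v ≤ 2 * envCurve m B (x + 1) := by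
    intro u v hu hv
    have hmem := (convex_convexHull ℝ (envPoints m B)) hu hv
      (a := 1 / 2) (b := 1 / 2) (by norm_num) (by norm_num) (by norm_num)
    have hmem' : (x + 1, (1 / 2) * u + (1 / 2) * v) ∈ convexHull ℝ (envPoints m B) := by
      convert hmem using 1
      ext
      · simp; ring
      · simp
    have := le_envCurve hm hBnn hBmono hmem'
    linarith
  have h1 : ∀ u, (x, u) ∈ convexHull ℝ (envPoints m B) →
      u ≤ 2 * envCurve m B (x + 1) - envCurve m B (x + 1 + 1) := by
    intro u hu
    have : envCurve m B (x + 1 + 1) ≤ 2 * envCurve m B (x + 1) - u :=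
      envCurve_le hm (by linarith) hxm fun v hv => by linarith [key u v hu hv]
    linarith
  have := envCurve_le hm hx0 (by linarith) h1
  linarith

/-- If the index grows by a power of two, `B` grows by at most that factor. -/
lemma pow_growth (hBdbl : ∀ ℓ ∈ POS m, 1 < ℓ → B ℓ ≤ 2 * B (ℓ / 2)) (j d : ℕ)
    (hle : 2 ^ (j + d) ≤ m) : B (2 ^ (j + d)) ≤ 2 ^ d * B (2 ^ j) := by
  induction d with
  | zero => simp
  | succ d ih =>
    have hsucc : 2 ^ (j + (d + 1)) = 2 ^ (j + d) * 2 := by rw [← add_assoc, pow_succ]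
    have hpos : 0 < 2 ^ (j + d) := by positivity
    have h1 := ih (by omega)
    have h2 := hBdbl _ ⟨j + (d + 1), rfl, hle⟩ (by omega)
    have h3 : 2 ^ (j + (d + 1)) / 2 = 2 ^ (j + d) := by omega
    rw [h3] at h2
    rw [pow_succ]
    linarith

/-- For `ℓ = 2 ^ j`, the curve lies below the line `x ↦ B ℓ * (1 + x / ℓ)`. -/
lemma envCurve_le_line (hm : 0 < m) (hBnn : ∀ ℓ ∈ POS m, 0 ≤ B ℓ)
    (hBmono : ∀ ℓ ∈ POS m, ∀ ℓ' ∈ POS m, ℓ ≤ ℓ' → B ℓ ≤ B ℓ')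
    (hBdbl : ∀ ℓ ∈ POS m, 1 < ℓ → B ℓ ≤ 2 * B (ℓ / 2)) {j : ℕ} (hj : 2 ^ j ≤ m)
    {x : ℝ} (hx0 : 0 ≤ x) (hxm : x ≤ m) :
    envCurve m B x ≤ B (2 ^ j) / 2 ^ j * x + B (2 ^ j) := by
  have hB0 : 0 ≤ B (2 ^ j) := hBnn _ ⟨j, rfl, hj⟩
  have hslope : 0 ≤ B (2 ^ j) / 2 ^ j := by positivity
  have hpow : ∀ i, 2 ^ i ≤ m → B (2 ^ i) ≤ B (2 ^ j) / 2 ^ j * 2 ^ i + B (2 ^ j) := by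
    intro i hi
    rcases le_total i j with hij | hij
    · have h1 := hBmono _ ⟨i, rfl, hi⟩ _ ⟨j, rfl, hj⟩ (Nat.pow_le_pow_right (by norm_num) hij)
      have h2 : 0 ≤ B (2 ^ j) / 2 ^ j * 2 ^ i := by positivity
      linarith
    · obtain ⟨d, rfl⟩ := Nat.exists_eq_add_of_le hij
      have h1 := pow_growth hBdbl j d hi
      have h2 : B (2 ^ j) / 2 ^ j * 2 ^ (j + d) = 2 ^ d * B (2 ^ j) := by
        rw [pow_add]
        field_simp
      linarith
  refine envCurve_le hm hx0 hxm fun v hv => hull_le_line ?_ hv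
  rintro q (⟨ℓ, ⟨i, rfl, hi⟩, rfl⟩ | rfl | rfl)
  · simpa using hpow i hi
  · simpa using hB0
  · have hK : 2 ^ Nat.log 2 m ≤ m := Nat.pow_log_le_self 2 hm.ne'
    have h1 := hpow _ hK
    have h2 : ((2 : ℝ) ^ Nat.log 2 m) ≤ m := by exact_mod_cast hK
    have h3 := mul_le_mul_of_nonneg_left h2 hslope
    simp only
    linarith

lemma envCurve_zero (hm : 0 < m) (hBnn : ∀ ℓ ∈ POS m, 0 ≤ B ℓ)
    (hBmono : ∀ ℓ ∈ POS m, ∀ ℓ' ∈ POS m, ℓ ≤ ℓ' → B ℓ ≤ B ℓ')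
    (hBdbl : ∀ ℓ ∈ POS m, 1 < ℓ → B ℓ ≤ 2 * B (ℓ / 2)) : envCurve m B 0 = 0 := by
  refine le_antisymm ?_ (le_envCurve hm hBnn hBmono (zero_mem_envHull m B))
  -- All points of `S` lie below the line `x ↦ B 1 * x` through the origin.
  refine envCurve_le hm le_rfl (by positivity) fun v hv => ?_
  have hB0 : 0 ≤ B 1 := hBnn 1 ⟨0, rfl, hm⟩
  have hpow : ∀ i, 2 ^ i ≤ m → B (2 ^ i) ≤ B 1 * 2 ^ i := by
    intro i hi
    have := pow_growth hBdbl 0 i (by simpa using hi)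
    simp only [zero_add, pow_zero] at this
    linarith
  have := hull_le_line (a := B 1) (b := 0) ?_ hv
  · simpa using this
  rintro q (⟨ℓ, ⟨i, rfl, hi⟩, rfl⟩ | rfl | rfl)
  · simpa using hpow i hi
  · simp
  · have hK : 2 ^ Nat.log 2 m ≤ m := Nat.pow_log_le_self 2 hm.ne'
    have h1 := hpow _ hK
    have h2 : ((2 : ℝ) ^ Nat.log 2 m) ≤ m := by exact_mod_cast hK
    have h3 := mul_le_mul_of_nonneg_left h2 hB0
    simp only
    linarith

end Envelope

theorem stmt_17 {m : ℕ} (hm : 0 < m) (f : (Fin m → ℝ) → ℝ) (hf : IsMonoSymNorm f)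
    (y : Fin m → ℝ) (hy0 : ∀ i, 0 ≤ y i) (hymono : ∀ i j : Fin m, i ≤ j → y j ≤ y i)
    (B : ℕ → ℝ) (hBnn : ∀ ℓ ∈ POS m, 0 ≤ B ℓ)
    (hBmono : ∀ ℓ ∈ POS m, ∀ ℓ' ∈ POS m, ℓ ≤ ℓ' → B ℓ ≤ B ℓ')
    (hBdbl : ∀ ℓ ∈ POS m, 1 < ℓ → B ℓ ≤ 2 * B (ℓ / 2))
    (h : Fin m → ℝ)
    (hdef : ∀ i : Fin m, h i = envCurve m B ((i : ℕ) + 1) - envCurve m B (i : ℕ)) :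
    ((∀ ℓ ∈ POS m, topl ℓ y ≤ B ℓ) → f y ≤ 2 * f h) ∧
    ((∀ ℓ ∈ POS m, B ℓ ≤ topl ℓ y) → f h / 3 ≤ f y) := by
  have hyanti : Antitone y := fun i j hij => hymono i j hij
  have hg0 := envCurve_zero hm hBnn hBmono hBdbl
  have hh0 : ∀ i, 0 ≤ h i := by
    intro i
    have hi : ((i : ℕ) : ℝ) + 1 ≤ m := by exact_mod_cast i.isLt
    rw [hdef, sub_nonneg]
    exact envCurve_mono hm hBnn hBmono (by positivity) (by linarith) hi
  have hext : ∀ n, n < m → extZero h n = envCurve m B ((n : ℝ) + 1) - envCurve m B n := by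
    intro n hn
    simp only [extZero, hn, dif_pos]
    exact hdef ⟨n, hn⟩
  have hextanti : Antitone (extZero h) := by
    refine antitone_nat_of_succ_le fun n => ?_
    by_cases hn : n + 1 < m
    · rw [hext n (by omega), hext (n + 1) hn]
      have hle : (n : ℝ) + 1 + 1 ≤ m := by exact_mod_cast hn
      have := envCurve_midpoint hm hBnn hBmono (Nat.cast_nonneg n) hle
      push_cast
      linarith
    · have : extZero h (n + 1) = 0 := by simp [extZero, hn]
      rw [this]
      exact extZero_nonneg hh0 n
  have hhanti : Antitone h := by
    intro i j hij
    rw [← extZero_val h i, ← extZero_val h j]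
    exact hextanti hij
  have hsum : ∀ k ≤ m, ∑ n ∈ Finset.range k, extZero h n = envCurve m B k := by
    intro k
    induction k with
    | zero => simp [hg0]
    | succ k ih =>
      intro hk
      rw [Finset.sum_range_succ, ih (by omega), hext k hk]
      push_cast
      ring
  have hscale : ∀ (c : ℝ) (x : Fin m → ℝ) (k : ℕ),
      ∑ n ∈ Finset.range k, extZero (c • x) n = c * ∑ n ∈ Finset.range k, extZero x n := by
    intro c x k
    rw [Finset.mul_sum]
    refine Finset.sum_congr rfl fun n _ => ?_
    unfold extZero
    split_ifs <;> simp
  have hey0 := extZero_nonneg hy0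
  have heyanti := extZero_antitone hy0 hyanti
  have hysub : ∀ a b, a ≤ b →
      ∑ n ∈ Finset.range a, extZero y n ≤ ∑ n ∈ Finset.range b, extZero y n := by
    intro a b hab
    exact Finset.sum_le_sum_of_subset_of_nonneg (Finset.range_mono hab) fun n _ _ => hey0 n
  constructor
  · intro hTop
    have hdom : f y ≤ f ((2 : ℝ) • h) := by
      refine hf.le_of_partialSum_le hy0 hyanti fun k hk => ?_
      rw [hscale, hsum k hk]
      rcases Nat.eq_zero_or_pos k with rfl | hkpos
      · simp [hg0]
      have hmem := pow_log_mem_POS hkpos hk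
      have hlk : 2 ^ Nat.log 2 k ≤ k := Nat.pow_log_le_self 2 hkpos.ne'
      have hkl : k < 2 ^ (Nat.log 2 k + 1) := Nat.lt_pow_succ_log_self (by norm_num) k
      rw [pow_succ] at hkl
      have h1 := hTop _ hmem
      have h2 := le_envCurve hm hBnn hBmono (POS_mem_envPoints (B := B) hmem)
      have hlk' : ((2 ^ Nat.log 2 k : ℕ) : ℝ) ≤ k := by exact_mod_cast hlk
      have hk' : (k : ℝ) ≤ m := by exact_mod_cast hk
      have h3 := envCurve_mono hm hBnn hBmono (Nat.cast_nonneg _) hlk' hk'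
      rw [topl_of_antitone hyanti] at h1
      generalize 2 ^ Nat.log 2 k = l at *
      have h4 := hysub k (l + l) (by omega)
      rw [Finset.sum_range_add] at h4
      have h5 : ∑ n ∈ Finset.range l, extZero y (l + n) ≤ ∑ n ∈ Finset.range l, extZero y n :=
        Finset.sum_le_sum fun n _ => heyanti (by omega)
      linarith
    rwa [hf.smul, abs_of_pos (by norm_num : (0 : ℝ) < 2)] at hdom
  · intro hTop
    have hdom : f h ≤ f ((3 : ℝ) • y) := by
      refine hf.le_of_partialSum_le hh0 hhanti fun k hk => ?_
      rw [hscale, hsum k hk]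
      rcases Nat.eq_zero_or_pos k with rfl | hkpos
      · simp [hg0]
      have hmem := pow_log_mem_POS hkpos hk
      have hlk : 2 ^ Nat.log 2 k ≤ k := Nat.pow_log_le_self 2 hkpos.ne'
      have hkl : k < 2 ^ (Nat.log 2 k + 1) := Nat.lt_pow_succ_log_self (by norm_num) k
      have h1 := hTop _ hmem
      have hk' : (k : ℝ) ≤ m := by exact_mod_cast hk
      have h2 := envCurve_le_line hm hBnn hBmono hBdbl (hlk.trans hk) (Nat.cast_nonneg k) hk'
      rw [topl_of_antitone hyanti] at h1
      have h3 := hysub _ _ hlk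
      have hB0 := hBnn _ hmem
      have hkl' : (k : ℝ) ≤ 2 ^ Nat.log 2 k * 2 := by
        rw [pow_succ] at hkl
        exact_mod_cast hkl.le
      have h4 : B (2 ^ Nat.log 2 k) / 2 ^ Nat.log 2 k * k ≤ 2 * B (2 ^ Nat.log 2 k) := by
        rw [div_mul_eq_mul_div, div_le_iff₀ (by positivity)]
        nlinarith [mul_le_mul_of_nonneg_left hkl' hB0]
      linarith
    rw [hf.smul, abs_of_pos (by norm_num : (0 : ℝ) < 3)] at hdom
    linarith
end
end
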